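/- arXiv:2410.02354 — 9 statements merged into one kernel-verified Lean document; each statement's English description precedes it below -/
import Mathlib

section
/- Conservation of velocity (Lemma 3 / 'Lemma-VH' of the paper). Let H, Λ, ω and Q₁, Q₂, Q₃ be elements of A with H = Λ·ω, [Λ, ω] = 0, and [Q_i, Λ] = 0 for each i, and define the velocity components V_i := (1/(iℏ))·[Q_i, H]. If [V_i, ω] = 0 for each i, then the velocity is conserved: [V_i, H] = 0 for each i. -/
theorem commute_lie_left {A : Type*} [NonUnitalRing A] {a b c : A}
    (hac : Commute a c) (hbc : Commute b c) : Commute ⁅a, b⁆ c :=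
  (hac.mul_left hbc).sub_left (hbc.mul_left hac)

theorem velocity_is_conserved_general {R A : Type*} [NonUnitalRing A] [SMul R A]
    [IsScalarTower R A A] [SMulCommClass R A A] {r : R} {H Λ ω Q V : A}
    (hH : H = Λ * ω) (hΛω : ⁅Λ, ω⁆ = 0) (hQΛ : ⁅Q, Λ⁆ = 0)
    (hV : V = r • ⁅Q, H⁆) (hVω : ⁅V, ω⁆ = 0) : ⁅V, H⁆ = 0 := by
  rw [← commute_iff_lie_eq] at hΛω hQΛ hVω ⊢
  have hHΛ : Commute H Λ := by
    rw [hH]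
    exact (Commute.refl Λ).mul_left hΛω.symm
  have hVΛ : Commute V Λ := by
    rw [hV]
    exact (commute_lie_left hQΛ hHΛ).smul_left r
  rw [hH]
  exact hVΛ.mul_right hVω

/-- Conservation of velocity (Lemma 'Lemma-VH').
`A` is a unital associative algebra over `ℂ`, `⁅a,b⁆ = a*b - b*a`.
Given `H = Λ * ω`, `[Λ, ω] = 0`, `[Q i, Λ] = 0`, and the velocity
`V i = (1/(iℏ)) • [Q i, H]`, if `[V i, ω] = 0` for each `i` then
`[V i, H] = 0` for each `i`. -/
theorem velocity_is_conserved
    {A : Type*} [Ring A] [Algebra ℂ A] (ℏ : ℝ) (hℏ : ℏ ≠ 0)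
    (H Λ ω : A) (Q V : Fin 3 → A)
    (hH : H = Λ * ω)
    (hΛω : ⁅Λ, ω⁆ = 0)
    (hQΛ : ∀ i, ⁅Q i, Λ⁆ = 0)
    (hV : ∀ i, V i = (Complex.I * (ℏ : ℂ))⁻¹ • ⁅Q i, H⁆)
    (hVω : ∀ i, ⁅V i, ω⁆ = 0) :
    ∀ i, ⁅V i, H⁆ = 0 := by
  intro i
  exact velocity_is_conserved_general hH hΛω (hQΛ i) (hV i) (hVω i)
end

section
/- Form of the velocity operator (Lemma 4 / 'Lemma-V' of the paper). Fix a real number t. Let H be invertible in A with inverse H⁻¹, and let Q_i, P_i (i = 1,2,3) satisfy [P_i, H] = 0. Define V_i := (1/(iℏ))·[Q_i, H] and M_i := t·P_i − (1/2)(Q_iH + HQ_i). If [V_i, H] = 0 and [M_i, H] = −iℏ·P_i for each i, then V_i = P_i·H⁻¹ for each i. -/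
/-!
The symmetrized product satisfies `[QH + HQ, H] = [Q, H²]`, and this equals `2[Q, H]H` as soon as
`[Q, H]` commutes with `H`. Hence `[M, H] = -[Q, H]H = -iℏ V H`, the term `t P` dropping out because
`P` commutes with `H`. Comparing with `[M, H] = -iℏ P` gives `V H = P`.
-/

section Commutators

variable {A : Type*} [Ring A]

theorem lie_mul_add_mul_right (a b : A) : ⁅a * b + b * a, b⁆ = ⁅a, b ^ 2⁆ := by
  simp only [Ring.lie_def]
  noncomm_ring

theorem lie_sq_of_commute {a b : A} (h : Commute ⁅a, b⁆ b) : ⁅a, b ^ 2⁆ = 2 • (⁅a, b⁆ * b) := by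
  calc ⁅a, b ^ 2⁆ = ⁅a, b⁆ * b + b * ⁅a, b⁆ := by simp only [Ring.lie_def]; noncomm_ring
    _ = 2 • (⁅a, b⁆ * b) := by rw [← h.eq, two_nsmul]

theorem lie_half_smul_mul_add_mul_of_commute {R : Type*} [CommRing R] [Invertible (2 : R)]
    [Algebra R A] {a b : A} (h : Commute ⁅a, b⁆ b) :
    ⁅(⅟2 : R) • (a * b + b * a), b⁆ = ⁅a, b⁆ * b := by
  let _ := LieRing.ofAssociativeRing (A := A)
  rw [smul_lie, lie_mul_add_mul_right, lie_sq_of_commute h, ← ofNat_smul_eq_nsmul R,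
    invOf_smul_smul]

end Commutators

theorem velocity_standard_form_general
    {R A : Type*} [CommRing R] [Invertible (2 : R)] [Ring A] [Algebra R A]
    {c t : R} (hc : IsSMulRegular A c) {H Q P V M : A}
    (hPH : ⁅P, H⁆ = 0)
    (hV : c • V = ⁅Q, H⁆)
    (hM : M = t • P - (⅟2 : R) • (Q * H + H * Q))
    (hVH : ⁅V, H⁆ = 0)
    (hMH : ⁅M, H⁆ = -(c • P)) :
    V * H = P := by
  have hQH : Commute ⁅Q, H⁆ H := hV ▸ (commute_iff_lie_eq.mpr hVH).smul_left c
  have hMH' : ⁅M, H⁆ = -(c • (V * H)) := by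
    let _ := LieRing.ofAssociativeRing (A := A)
    rw [hM, sub_lie, smul_lie, hPH, smul_zero, zero_sub,
      lie_half_smul_mul_add_mul_of_commute hQH, ← hV, smul_mul_assoc]
  exact hc (neg_injective (hMH'.symm.trans hMH))

/-- Form of the velocity operator (Lemma 'Lemma-V').
If `H` is invertible, `[P i, H] = 0`, `V i = (1/(iℏ)) • [Q i, H]`,
`M i = t • P i - (1/2)(Q i * H + H * Q i)`, `[V i, H] = 0` and
`[M i, H] = -iℏ • P i`, then `V i = P i * H⁻¹`. -/
theorem velocity_standard_form
    {A : Type*} [Ring A] [Algebra ℂ A] (ℏ : ℝ) (hℏ : ℏ ≠ 0) (t : ℝ)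
    (H Hinv : A) (Q P V M : Fin 3 → A)
    (hHinv1 : H * Hinv = 1) (hHinv2 : Hinv * H = 1)
    (hPH : ∀ i, ⁅P i, H⁆ = 0)
    (hV : ∀ i, V i = (Complex.I * (ℏ : ℂ))⁻¹ • ⁅Q i, H⁆)
    (hM : ∀ i, M i = (t : ℂ) • P i - (2 : ℂ)⁻¹ • (Q i * H + H * Q i))
    (hVH : ∀ i, ⁅V i, H⁆ = 0)
    (hMH : ∀ i, ⁅M i, H⁆ = -((Complex.I * (ℏ : ℂ)) • P i)) :
    ∀ i, V i = P i * Hinv := by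
  intro i
  have hc : Complex.I * (ℏ : ℂ) ≠ 0 :=
    mul_ne_zero Complex.I_ne_zero (Complex.ofReal_ne_zero.mpr hℏ)
  have hQ : (Complex.I * (ℏ : ℂ)) • V i = ⁅Q i, H⁆ := by rw [hV i, smul_inv_smul₀ hc]
  have hVP : V i * H = P i :=
    velocity_standard_form_general (smul_right_injective A hc) (hPH i) hQ (hM i) (hVH i) (hMH i)
  rw [← hVP, mul_assoc, hHinv1, mul_one]
end

section
/- Commutativity of position components (Lemma 5 / 'Lemma-XX' of the paper). Fix a real number t. Let H be invertible in A with inverse H⁻¹, and let Q_i, P_i (i = 1,2,3) satisfy [Q_i, P_j] = iℏ·δ_{ij}, [P_i, P_j] = 0, [P_i, H] = 0, and [Q_i, H] = iℏ·P_i·H⁻¹. Define L_k := ε_{klm}Q_lP_m and M_i := t·P_i − (1/2)(Q_iH + HQ_i). If the boost generators satisfy [M_i, M_j] = −iℏ·ε_{ijk}L_k for all i, j, then the position components commute among themselves: [Q_i, Q_j] = 0 for all i, j. -/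
/-- The Levi-Civita symbol on `Fin 3`, valued in `ℂ`. -/
noncomputable def eps (i j k : Fin 3) : ℂ :=
  ((j.val : ℂ) - (i.val : ℂ)) * ((k.val : ℂ) - (j.val : ℂ)) * ((k.val : ℂ) - (i.val : ℂ)) / 2

/-- The Kronecker delta on `Fin 3`, valued in `ℂ`. -/
noncomputable def kdelta (i j : Fin 3) : ℂ := if i = j then 1 else 0

/-!
Since `[Q i, H] = c P i H⁻¹`, reordering gives `M i = P i g - Q i H` with `g = t + (c/2) H⁻¹`,
which commutes with `H` and with every `P i`. The terms `P i g` commute with each other, and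
`[Q i H, P j g]` is symmetric in `i, j`, so the cross terms of `[M i, M j]` cancel and
`[M i, M j] = [Q i H, Q j H] = [Q i, Q j] H² - c (Q i P j - Q j P i)`.
The hypothesis on `[M i, M j]` says that the first summand vanishes, and `H` is invertible.
-/

theorem kdelta_comm (i j : Fin 3) : kdelta i j = kdelta j i := by
  simp only [kdelta, eq_comm]

theorem sum_eps_mul_eps (i j l m : Fin 3) :
    ∑ k, eps i j k * eps k l m = kdelta i l * kdelta j m - kdelta i m * kdelta j l := by
  fin_cases i <;> fin_cases j <;> fin_cases l <;> fin_cases m <;>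
    norm_num [Fin.sum_univ_three, eps, kdelta]

theorem sum_eps_smul_sum_eps_smul {V : Type*} [AddCommGroup V] [Module ℂ V]
    (u : Fin 3 → Fin 3 → V) (i j : Fin 3) :
    ∑ k, eps i j k • ∑ l, ∑ m, eps k l m • u l m = u i j - u j i := by
  calc ∑ k, eps i j k • ∑ l, ∑ m, eps k l m • u l m
      = ∑ l, ∑ m, (∑ k, eps i j k * eps k l m) • u l m := by
        simp only [Finset.smul_sum, Finset.sum_smul, smul_smul]
        rw [Finset.sum_comm]
        exact Finset.sum_congr rfl fun l _ => Finset.sum_comm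
    _ = u i j - u j i := by
        simp [sum_eps_mul_eps, kdelta, sub_smul]

section Commutator

variable {A : Type*} [NonUnitalRing A]

theorem lie_mul (a b c : A) : ⁅a, b * c⁆ = ⁅a, b⁆ * c + b * ⁅a, c⁆ := by
  simp only [Ring.lie_def, mul_sub, sub_mul, mul_assoc]
  abel

theorem lie_mul_left_of_commute {b c : A} (hbc : Commute b c) (a : A) :
    ⁅a * b, c⁆ = ⁅a, c⁆ * b := by
  rw [Ring.lie_def, Ring.lie_def, sub_mul, mul_assoc, hbc.eq]
  simp only [mul_assoc]

theorem lie_mul_mul_same (a b h : A) :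
    ⁅a * h, b * h⁆ = ⁅a, b⁆ * (h * h) - (a * ⁅b, h⁆ - b * ⁅a, h⁆) * h := by
  simp only [Ring.lie_def, mul_sub, sub_mul, mul_assoc]
  abel

theorem lie_sub_sub_eq_of_lie_eq {R : Type*} [NonUnitalNonAssocRing R] {a a' b b' : R}
    (ha : Commute a a') (hab : ⁅b, a'⁆ = ⁅b', a⁆) :
    ⁅a - b, a' - b'⁆ = ⁅b, b'⁆ := by
  calc ⁅a - b, a' - b'⁆ = ⁅a, a'⁆ + ⁅b', a⁆ - ⁅b, a'⁆ + ⁅b, b'⁆ := by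
        simp only [Ring.lie_def, mul_sub, sub_mul]
        abel
    _ = ⁅b, b'⁆ := by rw [ha.lie_eq, hab, zero_add, sub_self, zero_add]

theorem lie_mul_mul_swap {q q' p p' h g w : A} (hpp : Commute p p') (hqp : ⁅q, p'⁆ = ⁅q', p⁆)
    (hph : Commute p h) (hph' : Commute p' h) (hgh : Commute g h)
    (hqg : ⁅q, g⁆ = p * w) (hqg' : ⁅q', g⁆ = p' * w) :
    ⁅q * h, p' * g⁆ = ⁅q' * h, p * g⁆ := by
  calc ⁅q * h, p' * g⁆ = ⁅q, p' * g⁆ * h := lie_mul_left_of_commute (hph'.mul_left hgh).symm q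
    _ = ⁅q', p * g⁆ * h := by
        rw [lie_mul, lie_mul, hqg, hqg', hqp, ← mul_assoc, ← mul_assoc, hpp.eq]
    _ = ⁅q' * h, p * g⁆ := (lie_mul_left_of_commute (hph.mul_left hgh).symm q').symm

end Commutator

theorem lie_units_inv {A : Type*} [Ring A] (a : A) (u : Aˣ) :
    ⁅a, (↑u⁻¹ : A)⁆ = -(↑u⁻¹ * ⁅a, (u : A)⁆ * ↑u⁻¹) := by
  simp [Ring.lie_def, mul_sub, sub_mul, mul_assoc]

section Boost

variable {K A : Type*} [CommRing K] [Invertible (2 : K)] [Ring A] [Algebra K A]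

/-- The boost generator `t p - (q h + h q) / 2` along one coordinate axis, at time `t`, where
`q`, `p` are the position and momentum components along that axis and `h` is the energy. -/
def boost (t : K) (h q p : A) : A := t • p - ⅟(2 : K) • (q * h + h * q)

/-- The coefficient `t + (c / 2) h⁻¹` of the momentum in a boost generator once the energy has been
moved to the right of the position, where `[q, h] = c p h⁻¹`. -/
def boostCoeff (c t : K) (h : Aˣ) : A := t • 1 + (⅟(2 : K) * c) • ↑h⁻¹

theorem boost_eq {c : K} {h : Aˣ} {q p : A} (hqh : ⁅q, (h : A)⁆ = c • (p * ↑h⁻¹)) (t : K) :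
    boost t (h : A) q p = p * boostCoeff c t h - q * h := by
  have reorder : (h : A) * q = q * h - c • (p * ↑h⁻¹) := by
    rw [← hqh, Ring.lie_def, sub_sub_cancel]
  have halves : ⅟(2 : K) • (q * h + q * h) = q * h := by
    rw [← two_smul K, invOf_smul_smul]
  rw [boost, boostCoeff, reorder, add_sub, smul_sub, halves, mul_add, mul_smul_comm, mul_smul_comm,
    mul_one, mul_smul]
  abel

theorem commute_boostCoeff {a : A} {h : Aˣ} (hah : Commute a h) (c t : K) :
    Commute a (boostCoeff c t h) :=
  ((Commute.one_right a).smul_right t).add_right (hah.units_inv_right.smul_right _)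

theorem lie_boostCoeff {c : K} {h : Aˣ} {q p : A} (hph : Commute p (h : A))
    (hqh : ⁅q, (h : A)⁆ = c • (p * ↑h⁻¹)) (t : K) :
    ⁅q, boostCoeff c t h⁆ = p * -((⅟(2 : K) * c * c) • (↑h⁻¹ : A) ^ 3) := by
  calc ⁅q, boostCoeff c t h⁆ = (⅟(2 : K) * c) • ⁅q, (↑h⁻¹ : A)⁆ := by
        simp [boostCoeff, Ring.lie_def, mul_add, add_mul, smul_sub]
    _ = -((⅟(2 : K) * c * c) • (↑h⁻¹ * p * ↑h⁻¹ * ↑h⁻¹)) := by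
        rw [lie_units_inv, hqh, mul_smul_comm, smul_mul_assoc, smul_neg, smul_smul, ← mul_assoc]
    _ = p * -((⅟(2 : K) * c * c) • (↑h⁻¹ : A) ^ 3) := by
        rw [← hph.units_inv_right.eq, mul_neg, mul_smul_comm, pow_three]
        simp only [mul_assoc]

theorem lie_boost_boost {c : K} {h : Aˣ} {q q' p p' : A} (hqp : ⁅q, p'⁆ = ⁅q', p⁆)
    (hpp : Commute p p') (hph : Commute p (h : A)) (hph' : Commute p' (h : A))
    (hqh : ⁅q, (h : A)⁆ = c • (p * ↑h⁻¹)) (hqh' : ⁅q', (h : A)⁆ = c • (p' * ↑h⁻¹)) (t : K) :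
    ⁅boost t (h : A) q p, boost t (h : A) q' p'⁆
      = ⁅q, q'⁆ * (h : A) ^ 2 - c • (q * p' - q' * p) := by
  set g : A := boostCoeff c t h
  have pg_comm : Commute (p * g) (p' * g) :=
    (hpp.mul_right (commute_boostCoeff hph c t)).mul_left
      ((commute_boostCoeff hph' c t).symm.mul_right (Commute.refl g))
  have cross_symm : ⁅q * h, p' * g⁆ = ⁅q' * h, p * g⁆ :=
    lie_mul_mul_swap hpp hqp hph hph' (commute_boostCoeff (Commute.refl (h : A)) c t).symm
      (lie_boostCoeff hph hqh t) (lie_boostCoeff hph' hqh' t)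
  calc ⁅boost t (h : A) q p, boost t (h : A) q' p'⁆ = ⁅q * h, q' * h⁆ := by
        rw [boost_eq hqh, boost_eq hqh', lie_sub_sub_eq_of_lie_eq pg_comm cross_symm]
    _ = ⁅q, q'⁆ * (h : A) ^ 2 - c • (q * p' - q' * p) := by
        rw [lie_mul_mul_same, hqh, hqh', ← sq]
        simp [sub_mul, mul_assoc, smul_sub]

theorem position_components_commute_general {ι : Type*} (c t : K) (H : Aˣ) (Q P : ι → A)
    (hQP : ∀ i j, ⁅Q i, P j⁆ = ⁅Q j, P i⁆)
    (hPP : ∀ i j, ⁅P i, P j⁆ = 0)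
    (hPH : ∀ i, ⁅P i, (H : A)⁆ = 0)
    (hQH : ∀ i, ⁅Q i, (H : A)⁆ = c • (P i * ↑H⁻¹))
    (hMM : ∀ i j, ⁅boost t (H : A) (Q i) (P i), boost t (H : A) (Q j) (P j)⁆
      = -(c • (Q i * P j - Q j * P i))) (i j : ι) :
    ⁅Q i, Q j⁆ = 0 := by
  have boosts := lie_boost_boost (hQP i j) (commute_iff_lie_eq.2 (hPP i j))
    (commute_iff_lie_eq.2 (hPH i)) (commute_iff_lie_eq.2 (hPH j)) (hQH i) (hQH j) t
  have lie_mul_sq : ⁅Q i, Q j⁆ * (H : A) ^ 2 = 0 := by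
    rwa [hMM, neg_eq_zero_sub, sub_left_inj, eq_comm] at boosts
  exact (H ^ 2).mul_left_eq_zero.1 (by exact_mod_cast lie_mul_sq)

end Boost

/-- Commutativity of position components (Lemma 'Lemma-XX').
Given the Heisenberg relations between `Q` and `P`, conservation of momentum,
`[Q i, H] = iℏ • (P i * H⁻¹)`, `L k = ε_{klm} Q l * P m`,
`M i = t • P i - (1/2)(Q i H + H Q i)`, and `[M i, M j] = -iℏ ε_{ijk} • L k`,
the position components commute: `[Q i, Q j] = 0`. -/
theorem position_components_commute
    {A : Type*} [Ring A] [Algebra ℂ A] (ℏ : ℝ) (hℏ : ℏ ≠ 0) (t : ℝ)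
    (H Hinv : A) (Q P L M : Fin 3 → A)
    (hHinv1 : H * Hinv = 1) (hHinv2 : Hinv * H = 1)
    (hQP : ∀ i j, ⁅Q i, P j⁆ = (Complex.I * (ℏ : ℂ) * kdelta i j) • (1 : A))
    (hPP : ∀ i j, ⁅P i, P j⁆ = 0)
    (hPH : ∀ i, ⁅P i, H⁆ = 0)
    (hQH : ∀ i, ⁅Q i, H⁆ = (Complex.I * (ℏ : ℂ)) • (P i * Hinv))
    (hL : ∀ k, L k = ∑ l, ∑ m, eps k l m • (Q l * P m))
    (hM : ∀ i, M i = (t : ℂ) • P i - (2 : ℂ)⁻¹ • (Q i * H + H * Q i))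
    (hMM : ∀ i j, ⁅M i, M j⁆ = -((Complex.I * (ℏ : ℂ)) • ∑ k, eps i j k • L k)) :
    ∀ i j, ⁅Q i, Q j⁆ = 0 := by
  simp only [hM, hL, sum_eps_smul_sum_eps_smul, ← invOf_eq_inv (2 : ℂ)] at hMM
  exact position_components_commute_general (Complex.I * ℏ) (t : ℂ) ⟨H, Hinv, hHinv1, hHinv2⟩ Q P
    (fun i j => by rw [hQP, hQP, kdelta_comm]) hPP hPH hQH hMM
end

section
/- The intrinsic spin transforms as a vector under rotations (Lemma 11 / 'Lemma-SJ' of the paper). Fix a real number m > 0. Let W₀, W_i, P_i, J_i, ω be elements of A such that ω + m is invertible with inverse R, and suppose [W_i, J_j] = iℏ·ε_{ijk}W_k, [P_i, J_j] = iℏ·ε_{ijk}P_k, [W₀, J_j] = 0, and [ω, J_j] = 0 for all i, j. Define S_i := (1/m)·W_i − (1/m)·W₀·P_i·R. Then [S_i, J_j] = iℏ·ε_{ijk}S_k for all i, j. -/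
/-!
The tuples transforming under a fixed generator `x` with fixed coefficients form a linear space,
and it is preserved by multiplication on either side by anything commuting with `x`. Both `W₀` and
`R = (ω + m)⁻¹` commute with the rotation generators, so `W₀ P R` transforms as `P` does, and the
spin is a linear combination of it and `W`.
-/

/-- The tuple `V` is a multiplet under the generator `x`: bracketing with `x` on the right acts on
it through the coefficients `c`. A vector operator is a triple satisfying this for each generator
`J j`, with coefficients `c i k = iℏ ε_{ijk}`. -/
def IsMultiplet {K L ι : Type*} [Fintype ι] [Semiring K] [LieRing L] [Module K L]
    (c : ι → ι → K) (x : L) (V : ι → L) : Prop :=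
  ∀ i, ⁅V i, x⁆ = ∑ k, c i k • V k

theorem lie_mul_mul_of_commute {A : Type*} [NonUnitalRing A] {a b x : A}
    (ha : Commute a x) (hb : Commute b x) (v : A) : ⁅a * v * b, x⁆ = a * ⁅v, x⁆ * b :=
  calc ⁅a * v * b, x⁆ = a * v * (b * x) - x * a * v * b := by
        simp only [Ring.lie_def, mul_assoc]
    _ = a * v * (x * b) - a * x * v * b := by rw [hb.eq, ha.eq]
    _ = a * ⁅v, x⁆ * b := by simp only [Ring.lie_def, mul_sub, sub_mul, mul_assoc]

section

attribute [local instance] LieRing.ofAssociativeRing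

namespace IsMultiplet

variable {K L A ι : Type*} [CommRing K] [LieRing L] [Ring A] [Algebra K A] [Fintype ι]
  {c : ι → ι → K}

theorem sub [Module K L] {x : L} {V W : ι → L}
    (hV : IsMultiplet c x V) (hW : IsMultiplet c x W) : IsMultiplet c x (V - W) := fun i => by
  simp only [Pi.sub_apply, sub_lie, hV i, hW i, smul_sub, Finset.sum_sub_distrib]

theorem const_smul [LieAlgebra K L] {x : L} {V : ι → L}
    (hV : IsMultiplet c x V) (r : K) : IsMultiplet c x (r • V) := fun i => by
  simp only [Pi.smul_apply, smul_lie, hV i, Finset.smul_sum, smul_comm r]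

theorem mul_mul_of_commute {a b x : A} {V : ι → A}
    (hV : IsMultiplet c x V) (ha : Commute a x) (hb : Commute b x) :
    IsMultiplet c x fun i => a * V i * b := fun i => by
  simp only [lie_mul_mul_of_commute ha hb, hV i, Finset.mul_sum, Finset.sum_mul, mul_smul_comm,
    smul_mul_assoc]

end IsMultiplet

theorem intrinsic_spin_vector_under_rotations_general
    {K A ι : Type*} [CommRing K] [Ring A] [Algebra K A] [Fintype ι]
    {c : ι → ι → K} {m r s : K} {W0 ω R x : A} {W P S : ι → A}
    (hR1 : (ω + m • (1 : A)) * R = 1) (hR2 : R * (ω + m • (1 : A)) = 1)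
    (hW : IsMultiplet c x W) (hP : IsMultiplet c x P)
    (hW0 : ⁅W0, x⁆ = 0) (hω : ⁅ω, x⁆ = 0)
    (hS : ∀ i, S i = r • W i - s • (W0 * P i * R)) :
    IsMultiplet c x S := by
  have hωm : Commute (ω + m • (1 : A)) x :=
    (commute_iff_lie_eq.mpr hω).add_left ((Commute.one_left x).smul_left m)
  have hR : Commute R x := Commute.units_inv_left (u := ⟨_, R, hR1, hR2⟩) hωm
  have hWPR : IsMultiplet c x fun i => W0 * P i * R :=
    hP.mul_mul_of_commute (commute_iff_lie_eq.mpr hW0) hR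
  obtain rfl : S = r • W - s • fun i => W0 * P i * R := funext hS
  exact (hW.const_smul r).sub (hWPR.const_smul s)

end

/-- The intrinsic spin transforms as a vector under rotations
(Lemma 'Lemma-SJ'). With `ω + m` invertible with inverse `R`, and `W`, `P`
transforming as vectors under `J` while `W₀` and `ω` are rotation invariant,
the spin `S i = (1/m) • W i - (1/m) • (W₀ * P i * R)` satisfies
`[S i, J j] = iℏ ε_{ijk} • S k`. -/
theorem intrinsic_spin_vector_under_rotations
    {A : Type*} [Ring A] [Algebra ℂ A] (ℏ : ℝ) (hℏ : ℏ ≠ 0)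
    (m : ℝ) (hm : 0 < m)
    (W0 ω R : A) (W P J S : Fin 3 → A)
    (hR1 : (ω + (m : ℂ) • (1 : A)) * R = 1)
    (hR2 : R * (ω + (m : ℂ) • (1 : A)) = 1)
    (hWJ : ∀ i j, ⁅W i, J j⁆ = (Complex.I * (ℏ : ℂ)) • ∑ k, eps i j k • W k)
    (hPJ : ∀ i j, ⁅P i, J j⁆ = (Complex.I * (ℏ : ℂ)) • ∑ k, eps i j k • P k)
    (hW0J : ∀ j, ⁅W0, J j⁆ = 0)
    (hωJ : ∀ j, ⁅ω, J j⁆ = 0)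
    (hS : ∀ i, S i = ((m : ℂ))⁻¹ • W i - ((m : ℂ))⁻¹ • (W0 * P i * R)) :
    ∀ i j, ⁅S i, J j⁆ = (Complex.I * (ℏ : ℂ)) • ∑ k, eps i j k • S k := by
  simp only [Finset.smul_sum, smul_smul] at hWJ hPJ ⊢
  exact fun i j => intrinsic_spin_vector_under_rotations_general
    (c := fun i k => Complex.I * ℏ * eps i j k) hR1 hR2 (hWJ · j) (hPJ · j) (hW0J j) (hωJ j) hS i
end

section
/- Position and spin commute (Lemma 13 / 'Lemma-SX' of the paper). Fix a real number t. Let H be invertible in A with inverse H⁻¹, and let Q_i, P_i, S_i, L_i, N_i, M_i, K_i, J_i be elements of A such that: K_i = M_i + N_i and J_j = L_j + S_j for all i, j; M_i = t·P_i − (1/2)(Q_iH + HQ_i); [K_i, J_j] = iℏ·ε_{ijk}K_k; [M_i, L_j] = iℏ·ε_{ijk}M_k; [N_i, J_j] = iℏ·ε_{ijk}N_k; [S_j, P_i] = 0; [S_j, H] = 0; [P_i, H] = 0; and [Q_i, H] = iℏ·P_i·H⁻¹. Then [M_i, S_j] = 0 and [Q_i, S_j] = 0 for all i, j. -/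
/-!
`M` and `N` being tensor operators of the same type, the total bracket law makes `M` a tensor
operator under `J` as well as under `L`, so `M` commutes with the difference `S = J - L`. Then `S`
commutes with the symmetrized product of `Q` and `H`, which is `t P - M`, and with their commutator,
which is a multiple of `P H⁻¹`. The average of `Q H + H Q` and `[Q, H]` is `Q H`, and `H` is
invertible, so `S` commutes with `Q`.
-/

section TensorOperator

variable {R 𝔤 ι γ : Type*} [Semiring R] [LieRing 𝔤] [Module R 𝔤] [Fintype ι]
  {κ : R} {c : ι → γ → ι → R} {G G' : γ → 𝔤} {V W : ι → 𝔤}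

/-- `V` is a tensor operator under the generators `G`: bracketing with `G j` acts on the components
of `V` by the matrix `κ c(·, j, ·)`. With `κ = iℏ` and `c = ε` this is the notion of a vector
operator; `κ` is kept apart from the structure constants as in `[V_i, J_j] = iℏ ε_ijk V_k`. -/
def IsTensorOperator (κ : R) (c : ι → γ → ι → R) (G : γ → 𝔤) (V : ι → 𝔤) : Prop :=
  ∀ i j, ⁅V i, G j⁆ = κ • ∑ k, c i j k • V k

theorem IsTensorOperator.of_add (hVW : IsTensorOperator κ c G (V + W))
    (hW : IsTensorOperator κ c G W) : IsTensorOperator κ c G V := by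
  intro i j
  have h := hVW i j
  simp only [Pi.add_apply, add_lie, smul_add, Finset.sum_add_distrib, hW i j] at h
  exact add_right_cancel h

theorem IsTensorOperator.lie_eq_zero (hadd : IsTensorOperator κ c (G + G') V)
    (hV : IsTensorOperator κ c G V) (i : ι) (j : γ) : ⁅V i, G' j⁆ = 0 := by
  have h : ⁅V i, G j⁆ + ⁅V i, G' j⁆ = ⁅V i, G j⁆ := by
    rw [← lie_add, ← Pi.add_apply, hadd i j, hV i j]
  exact add_eq_left.mp h

end TensorOperator

section SymmetrizedProduct

variable {R A : Type*} [CommSemiring R] [Invertible (2 : R)] [Ring A] [Algebra R A]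

theorem invOf_two_smul_lie_add_invOf_two_smul_anticommutator (a b : A) :
    ⅟(2 : R) • ⁅a, b⁆ + ⅟(2 : R) • (a * b + b * a) = a * b := by
  rw [← smul_add, Ring.lie_def, sub_add_add_cancel, smul_add, invOf_two_smul_add_invOf_two_smul]

theorem commute_of_commute_lie_of_commute_symmetrized {s q : A} {h : Aˣ} (hsh : Commute s h)
    (hlie : Commute s ⁅q, (h : A)⁆) (hsymm : Commute s (⅟(2 : R) • (q * h + h * q))) :
    Commute s q := by
  have hqh : Commute s (q * h) := by
    rw [← invOf_two_smul_lie_add_invOf_two_smul_anticommutator (R := R) q (h : A)]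
    exact (hlie.smul_right _).add_right hsymm
  simpa using hqh.mul_right hsh.units_inv_right

end SymmetrizedProduct

section PositionAndSpin

attribute [local instance 100] LieRing.ofAssociativeRing

theorem position_and_spin_commute_general {R A ι γ : Type*} [CommSemiring R] [Invertible (2 : R)]
    [Ring A] [Algebra R A] [Fintype ι] (κ t : R) (c : ι → γ → ι → R)
    (H : Aˣ) (Q P M N K : ι → A) (S L J : γ → A)
    (hK : ∀ i, K i = M i + N i)
    (hJ : ∀ j, J j = L j + S j)
    (hM : ∀ i, M i = t • P i - ⅟(2 : R) • (Q i * H + H * Q i))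
    (hKJ : IsTensorOperator κ c J K)
    (hML : IsTensorOperator κ c L M)
    (hNJ : IsTensorOperator κ c J N)
    (hSP : ∀ i j, ⁅S j, P i⁆ = 0)
    (hSH : ∀ j, ⁅S j, (H : A)⁆ = 0)
    (hQH : ∀ i, ⁅Q i, (H : A)⁆ = κ • (P i * ↑H⁻¹)) :
    ∀ i j, ⁅M i, S j⁆ = 0 ∧ ⁅Q i, S j⁆ = 0 := by
  intro i j
  obtain rfl : K = M + N := funext hK
  obtain rfl : J = L + S := funext hJ
  have hMS : ⁅M i, S j⁆ = 0 := (hKJ.of_add hNJ).lie_eq_zero hML i j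
  have hSM : Commute (S j) (M i) := (commute_iff_lie_eq.mpr hMS).symm
  have hSP' : Commute (S j) (P i) := commute_iff_lie_eq.mpr (hSP i j)
  have hSH' : Commute (S j) H := commute_iff_lie_eq.mpr (hSH j)
  have hlie : Commute (S j) ⁅Q i, (H : A)⁆ := by
    rw [hQH]
    exact (hSP'.mul_right hSH'.units_inv_right).smul_right κ
  have hsymm : Commute (S j) (⅟(2 : R) • (Q i * H + H * Q i)) := by
    have hsymm_eq : ⅟(2 : R) • (Q i * H + H * Q i) = t • P i - M i := by
      rw [hM, sub_sub_cancel]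
    rw [hsymm_eq]
    exact (hSP'.smul_right t).sub_right hSM
  have hSQ : Commute (S j) (Q i) := commute_of_commute_lie_of_commute_symmetrized hSH' hlie hsymm
  exact ⟨hMS, commute_iff_lie_eq.mp hSQ.symm⟩

end PositionAndSpin

/-- Position and spin commute (Lemma 'Lemma-SX').
With `H` invertible, `K i = M i + N i`, `J j = L j + S j`,
`M i = t • P i - (1/2)(Q i H + H Q i)`, the rotation properties
`[K i, J j] = iℏ ε_{ijk} K k`, `[M i, L j] = iℏ ε_{ijk} M k`,
`[N i, J j] = iℏ ε_{ijk} N k`, and `[S j, P i] = 0`, `[S j, H] = 0`,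
`[P i, H] = 0`, `[Q i, H] = iℏ • (P i * H⁻¹)`, it follows that
`[M i, S j] = 0` and `[Q i, S j] = 0`. -/
theorem position_and_spin_commute
    {A : Type*} [Ring A] [Algebra ℂ A] (ℏ : ℝ) (hℏ : ℏ ≠ 0) (t : ℝ)
    (H Hinv : A) (Q P S L N M K J : Fin 3 → A)
    (hHinv1 : H * Hinv = 1) (hHinv2 : Hinv * H = 1)
    (hK : ∀ i, K i = M i + N i)
    (hJ : ∀ j, J j = L j + S j)
    (hM : ∀ i, M i = (t : ℂ) • P i - (2 : ℂ)⁻¹ • (Q i * H + H * Q i))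
    (hKJ : ∀ i j, ⁅K i, J j⁆ = (Complex.I * (ℏ : ℂ)) • ∑ k, eps i j k • K k)
    (hML : ∀ i j, ⁅M i, L j⁆ = (Complex.I * (ℏ : ℂ)) • ∑ k, eps i j k • M k)
    (hNJ : ∀ i j, ⁅N i, J j⁆ = (Complex.I * (ℏ : ℂ)) • ∑ k, eps i j k • N k)
    (hSP : ∀ i j, ⁅S j, P i⁆ = 0)
    (hSH : ∀ j, ⁅S j, H⁆ = 0)
    (hPH : ∀ i, ⁅P i, H⁆ = 0)
    (hQH : ∀ i, ⁅Q i, H⁆ = (Complex.I * (ℏ : ℂ)) • (P i * Hinv)) :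
    ∀ i j, ⁅M i, S j⁆ = 0 ∧ ⁅Q i, S j⁆ = 0 := by
  let : Invertible (2 : ℂ) := invertibleOfNonzero two_ne_zero
  exact position_and_spin_commute_general (Complex.I * ℏ) t eps ⟨H, Hinv, hHinv1, hHinv2⟩
    Q P M N K S L J hK hJ hM hKJ hML hNJ hSP hSH hQH
end

section
/- Separate conservation of the external and internal boost operators (Lemma 9 / 'Lemma-MNH' of the paper). Fix a real number t. Let H be invertible in A with inverse H⁻¹, and let Q_i, P_i, N_i, K_i be elements of A with [P_i, H] = 0, [Q_i, H] = iℏ·P_i·H⁻¹, M_i := t·P_i − (1/2)(Q_iH + HQ_i), and K_i = M_i + N_i. If [K_i, H] = −iℏ·P_i for each i, then [M_i, H] = −iℏ·P_i (so that, accounting for the explicit time dependence ∂M_i/∂t = P_i, the operator M_i is conserved) and [N_i, H] = 0 for each i. -/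
/-!
The bracket with `H` is a derivation killing `P` and `H`, so `⁅Q * H + H * Q, H⁆` equals
`⁅Q, H⁆ * H + H * ⁅Q, H⁆`. Since `⁅Q, H⁆` is proportional to `P * H⁻¹` and `P` commutes with `H`,
both orders contribute the same multiple of `P`, which the factor `1/2` averages.
-/

section Boost

variable {R A : Type*}

theorem lie_mul_add_mul_self [NonUnitalRing A] (a b : A) :
    ⁅a * b + b * a, b⁆ = ⁅a, b⁆ * b + b * ⁅a, b⁆ := by
  simp only [Ring.lie_def]
  noncomm_ring

variable [CommRing R] [Ring A] [Algebra R A] {c : R} {H : Aˣ} {P Q : A}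

theorem lie_mul_add_mul_eq_two_smul_smul (hPH : Commute P H)
    (hQH : ⁅Q, (H : A)⁆ = c • (P * ↑H⁻¹)) :
    ⁅Q * H + H * Q, (H : A)⁆ = (2 : R) • c • P := by
  have hconj : ↑H * (P * ↑H⁻¹) = P := by
    rw [← mul_assoc, ← hPH.eq, Units.mul_inv_cancel_right]
  rw [lie_mul_add_mul_self, hQH, smul_mul_assoc, mul_smul_comm, Units.inv_mul_cancel_right, hconj,
    two_smul]

theorem lie_smul_sub_invOf_two_smul [Invertible (2 : R)] (t : R) (hPH : Commute P H)
    (hQH : ⁅Q, (H : A)⁆ = c • (P * ↑H⁻¹)) :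
    ⁅t • P - ⅟(2 : R) • (Q * H + H * Q), (H : A)⁆ = -(c • P) := by
  let := LieRing.ofAssociativeRing (A := A)
  rw [sub_lie, smul_lie, smul_lie, hPH.lie_eq, lie_mul_add_mul_eq_two_smul_smul hPH hQH,
    invOf_smul_smul, smul_zero, zero_sub]

theorem boosts_separately_conserved_general [Invertible (2 : R)] {t : R} {N M K : A}
    (hPH : ⁅P, (H : A)⁆ = 0) (hQH : ⁅Q, (H : A)⁆ = c • (P * ↑H⁻¹))
    (hM : M = t • P - ⅟(2 : R) • (Q * H + H * Q)) (hK : K = M + N)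
    (hKH : ⁅K, (H : A)⁆ = -(c • P)) :
    ⁅M, (H : A)⁆ = -(c • P) ∧ ⁅N, (H : A)⁆ = 0 := by
  have hMH : ⁅M, (H : A)⁆ = -(c • P) :=
    hM ▸ lie_smul_sub_invOf_two_smul t (commute_iff_lie_eq.mpr hPH) hQH
  let := LieRing.ofAssociativeRing (A := A)
  rw [hK, add_lie, hMH] at hKH
  exact ⟨hMH, add_eq_left.mp hKH⟩

end Boost

/-- Separate conservation of the external and internal boost
operators (Lemma 'Lemma-MNH'). With `H` invertible, `[P i, H] = 0`,
`[Q i, H] = iℏ • (P i * H⁻¹)`, `M i = t • P i - (1/2)(Q i H + H Q i)` and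
`K i = M i + N i`, if `[K i, H] = -iℏ • P i` then `[M i, H] = -iℏ • P i`
(so that, accounting for the explicit time dependence `∂M i/∂t = P i`,
`M i` is conserved) and `[N i, H] = 0`. -/
theorem boosts_separately_conserved
    {A : Type*} [Ring A] [Algebra ℂ A] (ℏ : ℝ) (hℏ : ℏ ≠ 0) (t : ℝ)
    (H Hinv : A) (Q P N M K : Fin 3 → A)
    (hHinv1 : H * Hinv = 1) (hHinv2 : Hinv * H = 1)
    (hPH : ∀ i, ⁅P i, H⁆ = 0)
    (hQH : ∀ i, ⁅Q i, H⁆ = (Complex.I * (ℏ : ℂ)) • (P i * Hinv))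
    (hM : ∀ i, M i = (t : ℂ) • P i - (2 : ℂ)⁻¹ • (Q i * H + H * Q i))
    (hK : ∀ i, K i = M i + N i)
    (hKH : ∀ i, ⁅K i, H⁆ = -((Complex.I * (ℏ : ℂ)) • P i)) :
    ∀ i, ⁅M i, H⁆ = -((Complex.I * (ℏ : ℂ)) • P i) ∧ ⁅N i, H⁆ = 0 :=
  fun i => boosts_separately_conserved_general (H := ⟨H, Hinv, hHinv1, hHinv2⟩) (hPH i) (hQH i)
    (invOf_eq_inv (2 : ℂ) ▸ hM i) (hK i) (hKH i)
end

section
/- Foldy verification of the Poincaré relation between boosts and the Hamiltonian (part of the direction (ii) ⇒ (i) of the paper's main theorem, following Foldy 1956). In the Foldy setup, [K_i, H] = −iℏ·P_i for each i. -/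
/-!
Since `Λ² = 1` and `Λ` commutes with `ω`, the Hamiltonian satisfies `H² = ω² = P² + m²`. The
symmetrised product telescopes, `[Q H + H Q, H] = [Q, H²]`, so the canonical commutation relations
alone give `[-½(Q H + H Q), H] = -½[Q, P²] = -iℏ P`. The other two terms of the boost, `t P` and the
spin term, commute with `H`.
-/

section CommutatorIdentities

variable {𝕜 A : Type*} [CommRing 𝕜] [Ring A] [Algebra 𝕜 A]

theorem lie_mul_s12 (x y z : A) : ⁅x, y * z⁆ = ⁅x, y⁆ * z + y * ⁅x, z⁆ := by
  simp only [Ring.lie_def]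
  noncomm_ring

theorem mul_add_mul_lie_eq_lie_mul_self (q h : A) : ⁅q * h + h * q, h⁆ = ⁅q, h * h⁆ := by
  simp only [Ring.lie_def]
  noncomm_ring

theorem lie_mul_self_of_lie_eq_smul_one {c : 𝕜} {q p : A} (hqp : ⁅q, p⁆ = c • (1 : A)) :
    ⁅q, p * p⁆ = (2 * c) • p := by
  rw [lie_mul_s12, hqp, smul_one_mul, mul_smul_one, two_mul, add_smul]

attribute [local instance 100] LieRing.ofAssociativeRing

theorem lie_sum_mul_self_of_lie_eq_ite {ι : Type*} [Fintype ι] [DecidableEq ι] {c : 𝕜}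
    {q : A} {P : ι → A} {i : ι} (hqP : ∀ j, ⁅q, P j⁆ = (if i = j then c else 0) • (1 : A)) :
    ⁅q, ∑ j, P j * P j⁆ = (2 * c) • P i := by
  simp only [lie_sum, lie_mul_self_of_lie_eq_smul_one (hqP _), mul_ite, mul_zero, ite_smul,
    zero_smul, Finset.sum_ite_eq, Finset.mem_univ, ↓reduceIte]

theorem lie_add_smul_one (q a : A) (c : 𝕜) : ⁅q, a + c • (1 : A)⁆ = ⁅q, a⁆ := by
  rw [lie_add, ((Commute.one_right q).smul_right c).lie_eq, add_zero]

theorem boost_lie_of_commute [Invertible (2 : 𝕜)] (t : 𝕜) (q : A) {p n h : A}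
    (hp : Commute p h) (hn : Commute n h) :
    ⁅t • p - ⅟(2 : 𝕜) • (q * h + h * q) + n, h⁆ = -(⅟(2 : 𝕜) • ⁅q, h * h⁆) := by
  rw [add_lie, sub_lie, smul_lie, smul_lie, hp.lie_eq, hn.lie_eq,
    mul_add_mul_lie_eq_lie_mul_self, smul_zero, zero_sub, add_zero]

end CommutatorIdentities

theorem commute_of_mul_eq_one {M : Type*} [Monoid M] {a b x : M} (hab : a * b = 1)
    (hba : b * a = 1) (hax : Commute a x) : Commute b x :=
  Commute.units_inv_left (u := ⟨a, b, hab, hba⟩) hax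

theorem commute_sum_smul_mul {𝕜 A ι κ : Type*} [CommSemiring 𝕜] [Semiring A] [Algebra 𝕜 A]
    [Fintype ι] [Fintype κ] (e : ι → κ → 𝕜) {X : ι → A} {Y : κ → A} {h : A}
    (hX : ∀ j, Commute (X j) h) (hY : ∀ k, Commute (Y k) h) :
    Commute (∑ j, ∑ k, e j k • (X j * Y k)) h :=
  Commute.sum_left _ _ _ fun j _ => Commute.sum_left _ _ _ fun k _ =>
    ((hX j).mul_left (hY k)).smul_left (e j k)

/- Spin components have their own index type `σ` and arbitrary coefficients `e`: in dimension `d`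
the spin is an antisymmetric tensor, indexed by pairs, rather than a vector. -/
theorem foldy_boost_hamiltonian_relation_general
    {𝕜 A ι σ : Type*} [CommRing 𝕜] [Invertible (2 : 𝕜)] [Ring A] [Algebra 𝕜 A]
    [Fintype ι] [DecidableEq ι] [Fintype σ] (c m t : 𝕜) (e : ι → σ → ι → 𝕜)
    (Q P : ι → A) (S : σ → A) (ω Λ R : A)
    (hQP : ∀ i j, ⁅Q i, P j⁆ = (if i = j then c else 0) • (1 : A))
    (hΛΛ : Λ * Λ = 1)
    (hΛP : ∀ i, ⁅Λ, P i⁆ = 0)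
    (hΛS : ∀ j, ⁅Λ, S j⁆ = 0)
    (hΛω : ⁅Λ, ω⁆ = 0)
    (hωP : ∀ i, ⁅ω, P i⁆ = 0)
    (hωS : ∀ j, ⁅ω, S j⁆ = 0)
    (hω2 : ω * ω = ∑ j, P j * P j + (m ^ 2) • (1 : A))
    (hR1 : (ω + m • (1 : A)) * R = 1)
    (hR2 : R * (ω + m • (1 : A)) = 1) (i : ι) :
    ⁅t • P i - ⅟(2 : 𝕜) • (Q i * (Λ * ω) + (Λ * ω) * Q i)
      + Λ * (∑ j, ∑ k, e i j k • (S j * P k)) * R, Λ * ω⁆ = -(c • P i) := by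
  simp only [← commute_iff_lie_eq] at hΛP hΛS hΛω hωP hωS
  have hPH (k : ι) : Commute (P k) (Λ * ω) := ((hΛP k).mul_left (hωP k)).symm
  have hSH (j : σ) : Commute (S j) (Λ * ω) := ((hΛS j).mul_left (hωS j)).symm
  have hΛH : Commute Λ (Λ * ω) := (Commute.refl Λ).mul_right hΛω
  have hωH : Commute ω (Λ * ω) := hΛω.symm.mul_right (Commute.refl ω)
  have hRH : Commute R (Λ * ω) :=
    commute_of_mul_eq_one hR1 hR2 (hωH.add_left ((Commute.one_left _).smul_left m))
  have hNH : Commute (Λ * (∑ j, ∑ k, e i j k • (S j * P k)) * R) (Λ * ω) :=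
    (hΛH.mul_left (commute_sum_smul_mul (e i) hSH hPH)).mul_left hRH
  have hHH : (Λ * ω) * (Λ * ω) = ∑ j, P j * P j + (m ^ 2) • (1 : A) := by
    rw [hΛω.symm.mul_mul_mul_comm, hΛΛ, one_mul, hω2]
  calc _ = -(⅟(2 : 𝕜) • ⁅Q i, (Λ * ω) * (Λ * ω)⁆) := boost_lie_of_commute t (Q i) (hPH i) hNH
    _ = -(⅟(2 : 𝕜) • ⁅Q i, ∑ j, P j * P j⁆) := by rw [hHH, lie_add_smul_one]
    _ = -(⅟(2 : 𝕜) • (2 * c) • P i) := by rw [lie_sum_mul_self_of_lie_eq_ite (hQP i)]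
    _ = -(c • P i) := by rw [smul_smul, invOf_mul_cancel_left']

/-- Foldy verification of the Poincaré relation between boosts
and the Hamiltonian. In the Foldy setup, `[K i, H] = -iℏ • P i`. -/
theorem foldy_boost_hamiltonian_relation
    {A : Type*} [Ring A] [Algebra ℂ A] (ℏ : ℝ) (hℏ : ℏ ≠ 0)
    (m t : ℝ) (hm : 0 < m)
    (Q P S : Fin 3 → A) (ω ωinv Λ R : A)
    (hQQ : ∀ i j, ⁅Q i, Q j⁆ = 0)
    (hPP : ∀ i j, ⁅P i, P j⁆ = 0)
    (hQP : ∀ i j, ⁅Q i, P j⁆ = (Complex.I * (ℏ : ℂ) * kdelta i j) • (1 : A))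
    (hSS : ∀ i j, ⁅S i, S j⁆ = (Complex.I * (ℏ : ℂ)) • ∑ k, eps i j k • S k)
    (hQS : ∀ i j, ⁅Q i, S j⁆ = 0)
    (hPS : ∀ i j, ⁅P i, S j⁆ = 0)
    (hΛΛ : Λ * Λ = 1)
    (hΛQ : ∀ i, ⁅Λ, Q i⁆ = 0)
    (hΛP : ∀ i, ⁅Λ, P i⁆ = 0)
    (hΛS : ∀ i, ⁅Λ, S i⁆ = 0)
    (hΛω : ⁅Λ, ω⁆ = 0)
    (hωinv1 : ω * ωinv = 1) (hωinv2 : ωinv * ω = 1)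
    (hωP : ∀ i, ⁅ω, P i⁆ = 0)
    (hωS : ∀ i, ⁅ω, S i⁆ = 0)
    (hω2 : ω * ω = P 0 * P 0 + P 1 * P 1 + P 2 * P 2 + ((m : ℂ) ^ 2) • (1 : A))
    (hQω : ∀ i, ⁅Q i, ω⁆ = (Complex.I * (ℏ : ℂ)) • (P i * ωinv))
    (hR1 : (ω + (m : ℂ) • (1 : A)) * R = 1)
    (hR2 : R * (ω + (m : ℂ) • (1 : A)) = 1)
    (H : A) (L J N M K : Fin 3 → A)
    (hH : H = Λ * ω)
    (hL : ∀ i, L i = ∑ j, ∑ k, eps i j k • (Q j * P k))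
    (hJ : ∀ i, J i = L i + S i)
    (hN : ∀ i, N i = Λ * (∑ j, ∑ k, eps i j k • (S j * P k)) * R)
    (hM : ∀ i, M i = (t : ℂ) • P i - (2 : ℂ)⁻¹ • (Q i * H + H * Q i))
    (hK : ∀ i, K i = M i + N i)
    :
    ∀ i, ⁅K i, H⁆ = -((Complex.I * (ℏ : ℂ)) • P i) := by
  let _ : Invertible (2 : ℂ) := invertibleOfNonzero two_ne_zero
  simpa only [hK, hM, hN, hH, invOf_eq_inv] using
    foldy_boost_hamiltonian_relation_general _ _ _ eps Q P S ω Λ R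
      (by simpa [kdelta] using hQP) hΛΛ hΛP hΛS hΛω hωP hωS
      (by rw [hω2, Fin.sum_univ_three]) hR1 hR2
end

section
/- Foldy verification of the Poincaré relation between boosts and momenta (part of the direction (ii) ⇒ (i) of the paper's main theorem, following Foldy 1956). In the Foldy setup, [K_i, P_j] = −iℏ·δ_{ij}·H for all i, j. -/
theorem mul_lie_eq_mul_lie_add_lie_mul {A : Type*} [NonUnitalRing A] (a b p : A) :
    ⁅a * b, p⁆ = a * ⁅b, p⁆ + ⁅a, p⁆ * b := by
  simp only [Ring.lie_def, mul_sub, sub_mul, mul_assoc, sub_add_sub_cancel]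

theorem commute_of_left_inverse_of_right_inverse {M : Type*} [Monoid M] {x y p : M}
    (hxy : x * y = 1) (hyx : y * x = 1) (hxp : Commute x p) : Commute y p :=
  letI : Invertible x := ⟨y, hyx, hxy⟩
  hxp.invOf_left

theorem commute_sum_sum_smul_mul {𝕜 A ι κ : Type*} [NonUnitalSemiring A] [SMul 𝕜 A]
    [IsScalarTower 𝕜 A A] [SMulCommClass 𝕜 A A] [Fintype ι] [Fintype κ] (e : ι → κ → 𝕜)
    {a : ι → A} {b : κ → A} {p : A} (ha : ∀ j, Commute (a j) p) (hb : ∀ k, Commute (b k) p) :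
    Commute (∑ j, ∑ k, e j k • (a j * b k)) p :=
  Commute.sum_left _ _ _ fun j _ => Commute.sum_left _ _ _ fun k _ =>
    ((ha j).mul_left (hb k)).smul_left (e j k)

section Algebra

variable {𝕜 A : Type*} [CommRing 𝕜] [Ring A] [Algebra 𝕜 A]

attribute [local instance] LieRing.ofAssociativeRing

theorem lie_mul_add_mul_of_commute {q h p : A} {c : 𝕜} (hqp : ⁅q, p⁆ = c • (1 : A))
    (hhp : Commute h p) : ⁅q * h + h * q, p⁆ = (2 * c) • h := by
  have hqh : ⁅q * h, p⁆ = c • h := by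
    rw [mul_lie_eq_mul_lie_add_lie_mul, hhp.lie_eq, hqp, mul_zero, zero_add, smul_one_mul]
  have hhq : ⁅h * q, p⁆ = c • h := by
    rw [mul_lie_eq_mul_lie_add_lie_mul, hhp.lie_eq, hqp, zero_mul, add_zero, mul_smul_one]
  rw [add_lie, hqh, hhq, two_mul, add_smul]

theorem lie_smul_sub_invOf_two_smul_add_of_commute [Invertible (2 : 𝕜)] {r q h n p : A} (t : 𝕜)
    {c : 𝕜} (hrp : Commute r p) (hqp : ⁅q, p⁆ = c • (1 : A)) (hhp : Commute h p)
    (hnp : Commute n p) :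
    ⁅t • r - (⅟2 : 𝕜) • (q * h + h * q) + n, p⁆ = -(c • h) := by
  rw [add_lie, sub_lie, smul_lie, smul_lie, lie_mul_add_mul_of_commute hqp hhp, hrp.lie_eq,
    hnp.lie_eq, smul_zero, zero_sub, add_zero, smul_smul, invOf_mul_cancel_left']

end Algebra

theorem foldy_boost_momentum_relation_general {𝕜 A ι κ : Type*} [CommRing 𝕜] [Invertible (2 : 𝕜)]
    [Ring A] [Algebra 𝕜 A] [Fintype ι] [Fintype κ] (m t : 𝕜) (c : ι → ι → 𝕜) (e : ι → κ → ι → 𝕜)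
    {Q P : ι → A} {S : κ → A} {ω Λ R : A}
    (hPP : ∀ i j, ⁅P i, P j⁆ = 0)
    (hQP : ∀ i j, ⁅Q i, P j⁆ = c i j • (1 : A))
    (hPS : ∀ i j, ⁅P i, S j⁆ = 0)
    (hΛP : ∀ i, ⁅Λ, P i⁆ = 0)
    (hωP : ∀ i, ⁅ω, P i⁆ = 0)
    (hR1 : (ω + m • (1 : A)) * R = 1)
    (hR2 : R * (ω + m • (1 : A)) = 1)
    (i j : ι) :
    ⁅t • P i - (⅟2 : 𝕜) • (Q i * (Λ * ω) + Λ * ω * Q i) +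
        Λ * (∑ k, ∑ l, e i k l • (S k * P l)) * R, P j⁆ = -(c i j • (Λ * ω)) := by
  have hP (l : ι) : Commute (P l) (P j) := commute_iff_lie_eq.2 (hPP l j)
  have hS (k : κ) : Commute (S k) (P j) := (commute_iff_lie_eq.2 (hPS j k)).symm
  have hΛ : Commute Λ (P j) := commute_iff_lie_eq.2 (hΛP j)
  have hω : Commute ω (P j) := commute_iff_lie_eq.2 (hωP j)
  have hR : Commute R (P j) := commute_of_left_inverse_of_right_inverse hR1 hR2
    (hω.add_left ((Commute.one_left (P j)).smul_left m))
  exact lie_smul_sub_invOf_two_smul_add_of_commute t (hP i) (hQP i j) (hΛ.mul_left hω)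
    ((hΛ.mul_left (commute_sum_sum_smul_mul (e i) hS hP)).mul_left hR)

/-- Foldy verification of the Poincaré relation between boosts
and momenta. In the Foldy setup, `[K i, P j] = -iℏ δ_{ij} • H`. -/
theorem foldy_boost_momentum_relation
    {A : Type*} [Ring A] [Algebra ℂ A] (ℏ : ℝ) (hℏ : ℏ ≠ 0)
    (m t : ℝ) (hm : 0 < m)
    (Q P S : Fin 3 → A) (ω ωinv Λ R : A)
    (hQQ : ∀ i j, ⁅Q i, Q j⁆ = 0)
    (hPP : ∀ i j, ⁅P i, P j⁆ = 0)
    (hQP : ∀ i j, ⁅Q i, P j⁆ = (Complex.I * (ℏ : ℂ) * kdelta i j) • (1 : A))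
    (hSS : ∀ i j, ⁅S i, S j⁆ = (Complex.I * (ℏ : ℂ)) • ∑ k, eps i j k • S k)
    (hQS : ∀ i j, ⁅Q i, S j⁆ = 0)
    (hPS : ∀ i j, ⁅P i, S j⁆ = 0)
    (hΛΛ : Λ * Λ = 1)
    (hΛQ : ∀ i, ⁅Λ, Q i⁆ = 0)
    (hΛP : ∀ i, ⁅Λ, P i⁆ = 0)
    (hΛS : ∀ i, ⁅Λ, S i⁆ = 0)
    (hΛω : ⁅Λ, ω⁆ = 0)
    (hωinv1 : ω * ωinv = 1) (hωinv2 : ωinv * ω = 1)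
    (hωP : ∀ i, ⁅ω, P i⁆ = 0)
    (hωS : ∀ i, ⁅ω, S i⁆ = 0)
    (hω2 : ω * ω = P 0 * P 0 + P 1 * P 1 + P 2 * P 2 + ((m : ℂ) ^ 2) • (1 : A))
    (hQω : ∀ i, ⁅Q i, ω⁆ = (Complex.I * (ℏ : ℂ)) • (P i * ωinv))
    (hR1 : (ω + (m : ℂ) • (1 : A)) * R = 1)
    (hR2 : R * (ω + (m : ℂ) • (1 : A)) = 1)
    (H : A) (L J N M K : Fin 3 → A)
    (hH : H = Λ * ω)
    (hL : ∀ i, L i = ∑ j, ∑ k, eps i j k • (Q j * P k))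
    (hJ : ∀ i, J i = L i + S i)
    (hN : ∀ i, N i = Λ * (∑ j, ∑ k, eps i j k • (S j * P k)) * R)
    (hM : ∀ i, M i = (t : ℂ) • P i - (2 : ℂ)⁻¹ • (Q i * H + H * Q i))
    (hK : ∀ i, K i = M i + N i)
    :
    ∀ i j, ⁅K i, P j⁆ = -((Complex.I * (ℏ : ℂ) * kdelta i j) • H) := by
  simpa only [hK, hM, hN, hH, invOf_eq_inv] using foldy_boost_momentum_relation_general
    (m : ℂ) (t : ℂ) _ eps hPP hQP hPS hΛP hωP hR1 hR2
end

section
/- Form of the spatial Pauli-Lubanski vector under the spin-orbit decomposition (algebraic core of Proposition 1 / 'Lemma-N!' of the paper). Fix a real number t. Let Q_i, P_i, S_i, N_i, H be elements of A with [Q_i, P_j] = iℏ·δ_{ij}, [P_i, P_j] = 0, and [P_i, H] = 0 for all i, j. Define L_i := ε_{ijk}Q_jP_k, J_i := L_i + S_i, M_i := t·P_i − (1/2)(Q_iH + HQ_i), K_i := M_i + N_i, and the spatial Pauli-Lubanski components W_i := H·J_i − ε_{ijk}P_jK_k. If the orbital angular momentum is conserved, [L_i, H] = 0 for each i, then W_i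 = H·S_i − ε_{ijk}P_jN_k for each i. -/
/-!
Write `X × Y` for the vector with components `ε_{ijk} X_j Y_k`. Antisymmetry of `ε` and symmetry of
`[Q_j, P_k]` in `j` and `k` give `P × P = 0` and `P × Q = -(Q × P) = -L`. As `H` commutes with `P`,
it can be pulled out of `P × (QH + HQ)` on either side, so `P × M = (LH + HL) / 2`, which is `HL`
once `L` is conserved. This cancels the orbital part of `HJ` in `W = HJ - P × K`.
-/

section Contraction

variable {R A ι : Type*} [CommRing R] [Ring A] [Algebra R A] [Fintype ι]

/-- The contraction `c_{jk} X_j Y_k` of the products of two families of algebra elements, bundled as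
a linear map in `Y`. When `c j k = ε_{ijk}` it is the `i`-th component of the cross product `X × Y`,
in this order of the noncommuting factors. -/
def tensorContraction (c : ι → ι → R) (X : ι → A) : (ι → A) →ₗ[R] A :=
  ∑ j, ∑ k, c j k • (LinearMap.mulLeft R (X j) ∘ₗ LinearMap.proj k)

theorem tensorContraction_apply (c : ι → ι → R) (X Y : ι → A) :
    tensorContraction c X Y = ∑ j, ∑ k, c j k • (X j * Y k) := by
  simp [tensorContraction]

theorem tensorContraction_mul_right (c : ι → ι → R) (X Y : ι → A) (a : A) :
    tensorContraction c X (fun k ↦ Y k * a) = tensorContraction c X Y * a := by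
  simp only [tensorContraction_apply, Finset.sum_mul, smul_mul_assoc, mul_assoc]

theorem tensorContraction_mul_left (c : ι → ι → R) {X : ι → A} (Y : ι → A) {a : A}
    (hX : ∀ j, Commute (X j) a) :
    tensorContraction c X (fun k ↦ a * Y k) = a * tensorContraction c X Y := by
  simp only [tensorContraction_apply, Finset.mul_sum, mul_smul_comm, (hX _).left_comm]

variable [Invertible (2 : R)] {c : ι → ι → R}

theorem sum_antisymm_smul_symm_eq_zero {V : Type*} [AddCommGroup V] [Module R V] {s : ι → ι → V}
    (hc : ∀ j k, c j k = -c k j) (hs : ∀ j k, s j k = s k j) :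
    ∑ j, ∑ k, c j k • s j k = 0 := by
  have eq_neg : ∑ j, ∑ k, c j k • s j k = -∑ j, ∑ k, c j k • s j k := by
    calc ∑ j, ∑ k, c j k • s j k
        = ∑ k, ∑ j, c j k • s j k := Finset.sum_comm
      _ = ∑ k, ∑ j, -(c k j • s k j) := by
          refine Finset.sum_congr rfl fun k _ ↦ Finset.sum_congr rfl fun j _ ↦ ?_
          rw [hc j k, hs j k, neg_smul]
      _ = -∑ j, ∑ k, c j k • s j k := by simp only [Finset.sum_neg_distrib]
  refine (isUnit_of_invertible (2 : R)).smul_eq_zero.mp ?_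
  rw [two_smul]
  exact eq_neg_iff_add_eq_zero.mp eq_neg

theorem tensorContraction_self_eq_zero {X : ι → A}
    (hc : ∀ j k, c j k = -c k j) (hX : ∀ j k, Commute (X j) (X k)) :
    tensorContraction c X X = 0 := by
  rw [tensorContraction_apply]
  exact (sum_antisymm_smul_symm_eq_zero (s := fun j k ↦ X j * X k) hc fun j k ↦ (hX j k).eq :)

theorem tensorContraction_swap {X Y : ι → A}
    (hc : ∀ j k, c j k = -c k j) (hXY : ∀ j k, ⁅X j, Y k⁆ = ⁅X k, Y j⁆) :
    tensorContraction c Y X = -tensorContraction c X Y := by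
  have symm : ∀ j k, X j * Y k + Y j * X k = X k * Y j + Y k * X j := fun j k ↦ by
    have h := hXY j k
    rw [Ring.lie_def, Ring.lie_def, sub_eq_sub_iff_add_eq_add] at h
    exact h
  rw [eq_neg_iff_add_eq_zero, add_comm, tensorContraction_apply, tensorContraction_apply]
  simpa only [smul_add, Finset.sum_add_distrib] using sum_antisymm_smul_symm_eq_zero hc symm

theorem tensorContraction_orbital_boost {H : A} {Q P : ι → A} (t : R)
    (hc : ∀ j k, c j k = -c k j) (hQP : ∀ j k, ⁅Q j, P k⁆ = ⁅Q k, P j⁆)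
    (hPP : ∀ j k, Commute (P j) (P k)) (hPH : ∀ j, Commute (P j) H) :
    tensorContraction c P (fun k ↦ t • P k - ⅟(2 : R) • (Q k * H + H * Q k)) =
      ⅟(2 : R) • (tensorContraction c Q P * H + H * tensorContraction c Q P) := by
  calc tensorContraction c P (fun k ↦ t • P k - ⅟(2 : R) • (Q k * H + H * Q k))
      = tensorContraction c P (t • P - ⅟(2 : R) • ((fun k ↦ Q k * H) + fun k ↦ H * Q k)) := rfl
    _ = t • tensorContraction c P P -
          ⅟(2 : R) • (tensorContraction c P Q * H + H * tensorContraction c P Q) := by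
        rw [map_sub, map_smul, map_smul, map_add, tensorContraction_mul_right,
          tensorContraction_mul_left c Q hPH]
    _ = ⅟(2 : R) • (tensorContraction c Q P * H + H * tensorContraction c Q P) := by
        rw [tensorContraction_self_eq_zero hc hPP, tensorContraction_swap hc hQP]
        simp only [neg_mul, mul_neg]
        module

theorem tensorContraction_orbital_boost_of_conserved {H : A} {Q P : ι → A} (t : R)
    (hc : ∀ j k, c j k = -c k j) (hQP : ∀ j k, ⁅Q j, P k⁆ = ⁅Q k, P j⁆)
    (hPP : ∀ j k, Commute (P j) (P k)) (hPH : ∀ j, Commute (P j) H)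
    (hLH : Commute (tensorContraction c Q P) H) :
    tensorContraction c P (fun k ↦ t • P k - ⅟(2 : R) • (Q k * H + H * Q k)) =
      H * tensorContraction c Q P := by
  rw [tensorContraction_orbital_boost t hc hQP hPP hPH, hLH.eq, smul_add,
    invOf_two_smul_add_invOf_two_smul]

end Contraction

theorem eps_antisymm_right (i j k : Fin 3) : eps i j k = -eps i k j := by
  unfold eps
  ring

theorem pauli_lubanski_spatial_form_general
    {R A ι κ : Type*} [CommRing R] [Invertible (2 : R)] [Ring A] [Algebra R A] [Fintype ι]
    {ε : κ → ι → ι → R} (hε : ∀ i j k, ε i j k = -ε i k j) (t : R)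
    (H : A) (Q P N M K : ι → A) (S L J W : κ → A)
    (hQP : ∀ j k, ⁅Q j, P k⁆ = ⁅Q k, P j⁆)
    (hPP : ∀ j k, ⁅P j, P k⁆ = 0)
    (hPH : ∀ j, ⁅P j, H⁆ = 0)
    (hL : ∀ i, L i = ∑ j, ∑ k, ε i j k • (Q j * P k))
    (hJ : ∀ i, J i = L i + S i)
    (hM : ∀ k, M k = t • P k - ⅟(2 : R) • (Q k * H + H * Q k))
    (hK : ∀ k, K k = M k + N k)
    (hW : ∀ i, W i = H * J i - ∑ j, ∑ k, ε i j k • (P j * K k))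
    (hLH : ∀ i, ⁅L i, H⁆ = 0) (i : κ) :
    W i = H * S i - ∑ j, ∑ k, ε i j k • (P j * N k) := by
  simp only [← tensorContraction_apply] at hL hW ⊢
  simp only [← commute_iff_lie_eq] at hPP hPH hLH
  have boost : tensorContraction (ε i) P M = H * L i := by
    rw [funext hM, hL]
    exact tensorContraction_orbital_boost_of_conserved t (hε i) hQP hPP hPH (hL i ▸ hLH i)
  calc W i = H * (L i + S i) - tensorContraction (ε i) P (M + N) := by
        rw [hW, hJ, show K = M + N from funext hK]
    _ = H * S i - tensorContraction (ε i) P N := by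
        rw [map_add, boost, mul_add, add_sub_add_left_eq_sub]

/-- Form of the spatial Pauli-Lubanski vector under the
spin-orbit decomposition (algebraic core of Proposition 'Lemma-N!').
With the Heisenberg relations, conservation of momentum, and the definitions
`L i = ε_{ijk} Q j P k`, `J i = L i + S i`,
`M i = t • P i - (1/2)(Q i H + H Q i)`, `K i = M i + N i`,
`W i = H J i - ε_{ijk} P j K k`, if the orbital angular momentum is conserved
(`[L i, H] = 0`) then `W i = H S i - ε_{ijk} P j N k`. -/
theorem pauli_lubanski_spatial_form
    {A : Type*} [Ring A] [Algebra ℂ A] (ℏ : ℝ) (hℏ : ℏ ≠ 0) (t : ℝ)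
    (H : A) (Q P S N L J M K W : Fin 3 → A)
    (hQP : ∀ i j, ⁅Q i, P j⁆ = (Complex.I * (ℏ : ℂ) * kdelta i j) • (1 : A))
    (hPP : ∀ i j, ⁅P i, P j⁆ = 0)
    (hPH : ∀ i, ⁅P i, H⁆ = 0)
    (hL : ∀ i, L i = ∑ j, ∑ k, eps i j k • (Q j * P k))
    (hJ : ∀ i, J i = L i + S i)
    (hM : ∀ i, M i = (t : ℂ) • P i - (2 : ℂ)⁻¹ • (Q i * H + H * Q i))
    (hK : ∀ i, K i = M i + N i)
    (hW : ∀ i, W i = H * J i - ∑ j, ∑ k, eps i j k • (P j * K k))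
    (hLH : ∀ i, ⁅L i, H⁆ = 0) :
    ∀ i, W i = H * S i - ∑ j, ∑ k, eps i j k • (P j * N k) :=
  pauli_lubanski_spatial_form_general eps_antisymm_right (t : ℂ) H Q P N M K S L J W
    (fun j k ↦ by rw [hQP, hQP, kdelta_comm]) hPP hPH hL hJ
    (by simpa only [invOf_eq_inv] using hM) hK hW hLH
end
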